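/- Let X and Y be measurable spaces, ν̂ a probability kernel from Y to X, and π a probability measure on X × Y with y-marginal Q. Then the supremum of ∫ c dπ over all ν̂-normalized measurable functions c : X × Y → ℝ with well-defined ∫ c dπ equals D_KL(π | ν̂ dQ). Equivalently, H^{ν̂}(π) = −D_KL(π | ν̂ dQ); in particular, if ν̂ is the constant kernel ν̂^y = ν for a probability ν on X, then H^ν(π) = −D_KL(π | ν × Q). -/

import Mathlib

open MeasureTheory ENNReal ProbabilityTheory

noncomputable section
open scoped Classical

/-- The extended-real integral `∫ f⁺ dμ − ∫ f⁻ dμ`, valued in `EReal`. -/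
def eInt {α : Type*} [MeasurableSpace α] (μ : Measure α) (f : α → ℝ) : EReal :=
  ((∫⁻ x, ENNReal.ofReal (f x) ∂μ : ℝ≥0∞) : EReal)
    - ((∫⁻ x, ENNReal.ofReal (-f x) ∂μ : ℝ≥0∞) : EReal)

/-- The extended integral of `f` with respect to `μ` is well defined (not `+∞ − ∞`). -/
def IntWellDef {α : Type*} [MeasurableSpace α] (μ : Measure α) (f : α → ℝ) : Prop :=
  (∫⁻ x, ENNReal.ofReal (f x) ∂μ ≠ ⊤) ∨ (∫⁻ x, ENNReal.ofReal (-f x) ∂μ ≠ ⊤)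

/-- Kullback–Leibler divergence `D_KL(μ | ν) = ∫ log (dμ/dν) dμ` if `μ ≪ ν`, `+∞` otherwise. -/
def KL {α : Type*} [MeasurableSpace α] (μ ν : Measure α) : EReal :=
  if μ ≪ ν then eInt μ (fun x => Real.log ((μ.rnDeriv ν x).toReal)) else ⊤

/-- `S^ν(P) = −sup{∫ c dP : c measurable, ∫ e^c dν = 1, ∫ c dP well defined}`. -/
def SEnt {X : Type*} [MeasurableSpace X] (ν P : Measure X) : EReal :=
  - sSup { r : EReal | ∃ c : X → ℝ, Measurable c ∧ (∫ x, Real.exp (c x) ∂ν) = 1 ∧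
      IntWellDef P c ∧ r = eInt P c }

/-- `H^{ν̂}(π)`: entropy of `π` relative to the probability kernel `ν̂ = κ`, i.e. minus the
supremum of `∫ c dπ` over `κ`-normalized measurable functions with well-defined integral. -/
def Hker {X Y : Type*} [MeasurableSpace X] [MeasurableSpace Y]
    (κ : Kernel Y X) (π : Measure (X × Y)) : EReal :=
  - sSup { r : EReal | ∃ c : X × Y → ℝ, Measurable c ∧
      (∀ y, (∫ x, Real.exp (c (x, y)) ∂(κ y)) = 1) ∧ IntWellDef π c ∧ r = eInt π c }

/-- `H^ν(π)`: entropy of `π` relative to an a priori probability `ν` on `X`. -/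
def Hnu {X Y : Type*} [MeasurableSpace X] [MeasurableSpace Y]
    (ν : Measure X) (π : Measure (X × Y)) : EReal :=
  - sSup { r : EReal | ∃ c : X × Y → ℝ, Measurable c ∧
      (∀ y, (∫ x, Real.exp (c (x, y)) ∂ν) = 1) ∧ IntWellDef π c ∧ r = eInt π c }

/-- The probability `ν̂ dQ` on `X × Y`, defined by
`∫ f d(ν̂ dQ) = ∫_Y ∫_X f(x,y) dν̂^y(x) dQ(y)`. -/
def kernMeas {X Y : Type*} [MeasurableSpace X] [MeasurableSpace Y]
    (κ : Kernel Y X) (Q : Measure Y) : Measure (X × Y) :=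
  (Q.compProd κ).map Prod.swap

/-!
Gibbs' inequality bounds `∫ c dπ` by the divergence for every normalized `c`, because
`c ≤ log p + (e^c / p - 1)` with `p = dπ/d(ν̂ dQ)`, and the bracket has nonpositive `π`-integral.

Conversely, a function `f` with `∫ e^f dν̂^y ≤ 1` for `Q`-almost every `y` lies almost everywhere
below the normalized function `f - log ∫ e^f dν̂^y`, so `∫ f dπ` is a lower bound for the supremum.
If `π ≪ ν̂ dQ`, the disintegration of `ν̂ dQ` shows that `p` itself has fibre integrals at most `1`;
mixing it with a small constant density `r` makes its logarithm bounded below, at the cost of an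
additive `δ`. Otherwise some `ν̂ dQ`-null set `A` is charged by `π`, and `f = s 1_A + log r` gives
lower bounds tending to `+∞` with `s`.
-/

section ExtendedIntegral

variable {α : Type*} [MeasurableSpace α] {μ : Measure α} {f g : α → ℝ}

theorem eInt_mono_ae (h : f ≤ᵐ[μ] g) : eInt μ f ≤ eInt μ g := by
  refine EReal.sub_le_sub ?_ ?_ <;>
    refine EReal.coe_ennreal_le_coe_ennreal_iff.2 (lintegral_mono_ae ?_)
  · filter_upwards [h] with x hx using ENNReal.ofReal_le_ofReal hx
  · filter_upwards [h] with x hx using ENNReal.ofReal_le_ofReal (neg_le_neg hx)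

theorem eInt_of_integrable (hf : Integrable f μ) : eInt μ f = (∫ x, f x ∂μ : ℝ) := by
  have hf_neg : ∫⁻ x, ENNReal.ofReal (-f x) ∂μ ≠ ⊤ := hf.neg.lintegral_lt_top.ne
  rw [integral_eq_lintegral_pos_part_sub_lintegral_neg_part hf, EReal.coe_sub,
    EReal.coe_ennreal_toReal hf.lintegral_lt_top.ne, EReal.coe_ennreal_toReal hf_neg]
  rfl

theorem lintegral_ofReal_neg_ne_top_of_le_ae (hfg : f ≤ᵐ[μ] g)
    (hf : ∫⁻ x, ENNReal.ofReal (-f x) ∂μ ≠ ⊤) : ∫⁻ x, ENNReal.ofReal (-g x) ∂μ ≠ ⊤ := by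
  refine ne_top_of_le_ne_top hf (lintegral_mono_ae ?_)
  filter_upwards [hfg] with x hx using ENNReal.ofReal_le_ofReal (neg_le_neg hx)

theorem ofReal_add_posPart_negPart (a b : ℝ) :
    ENNReal.ofReal (a + b) + (ENNReal.ofReal (-a) + ENNReal.ofReal (-b)) =
      ENNReal.ofReal (-(a + b)) + (ENNReal.ofReal a + ENNReal.ofReal b) := by
  rw [← ENNReal.toReal_eq_toReal_iff' (by finiteness) (by finiteness)]
  simp only [ENNReal.toReal_add, ENNReal.ofReal_ne_top, ENNReal.add_ne_top, ne_eq,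
    not_false_eq_true, and_self, ENNReal.toReal_ofReal']
  linarith [max_zero_sub_eq_self a, max_zero_sub_eq_self b, max_zero_sub_eq_self (a + b)]

theorem lintegral_ofReal_add_posPart_negPart (hf : AEMeasurable f μ) (hg : AEMeasurable g μ) :
    ∫⁻ x, ENNReal.ofReal (f x + g x) ∂μ +
        (∫⁻ x, ENNReal.ofReal (-f x) ∂μ + ∫⁻ x, ENNReal.ofReal (-g x) ∂μ) =
      ∫⁻ x, ENNReal.ofReal (-(f x + g x)) ∂μ +
        (∫⁻ x, ENNReal.ofReal (f x) ∂μ + ∫⁻ x, ENNReal.ofReal (g x) ∂μ) := by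
  rw [← lintegral_add_left' (by fun_prop), ← lintegral_add_left' (by fun_prop),
    ← lintegral_add_left' (by fun_prop), ← lintegral_add_left' (by fun_prop)]
  exact lintegral_congr fun x => ofReal_add_posPart_negPart (f x) (g x)

theorem lintegral_ofReal_add_le (hf : AEMeasurable f μ) :
    ∫⁻ x, ENNReal.ofReal (f x + g x) ∂μ ≤
      ∫⁻ x, ENNReal.ofReal (f x) ∂μ + ∫⁻ x, ENNReal.ofReal (g x) ∂μ := by
  rw [← lintegral_add_left' (by fun_prop)]
  exact lintegral_mono fun x => ENNReal.ofReal_add_le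

theorem coe_sub_coe_eq_add_of_add_eq {P N P' N' a b : ℝ≥0∞} (ha : a ≠ ⊤) (hb : b ≠ ⊤)
    (h : P' + (N + b) = N' + (P + a)) (hP : P' ≤ P + a) (hN : N' ≤ N + b)
    (hPN : P ≠ ⊤ ∨ N ≠ ⊤) :
    (P' : EReal) - N' = P - N + ((a.toReal - b.toReal : ℝ) : EReal) := by
  have hN'_ne (hN_ne : N ≠ ⊤) : N' ≠ ⊤ := ne_top_of_le_ne_top (by finiteness) hN
  have hP'_ne (hP_ne : P ≠ ⊤) : P' ≠ ⊤ := ne_top_of_le_ne_top (by finiteness) hP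
  obtain rfl | hP_ne := eq_or_ne P ⊤
  · have hN_ne : N ≠ ⊤ := hPN.resolve_left (not_not_intro rfl)
    have hP' : P' = ⊤ := by simpa [hN_ne, hb] using h
    lift N to NNReal using hN_ne
    lift N' to NNReal using hN'_ne ENNReal.coe_ne_top
    rw [hP', EReal.coe_ennreal_top, EReal.coe_nnreal_eq_coe_real, EReal.coe_nnreal_eq_coe_real,
      EReal.top_sub_coe, EReal.top_sub_coe, EReal.top_add_coe]
  obtain rfl | hN_ne := eq_or_ne N ⊤
  · have hN' : N' = ⊤ := by simpa [hP_ne, ha] using h.symm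
    rw [hN', EReal.coe_ennreal_top, EReal.sub_top, EReal.sub_top, EReal.bot_add]
  lift P to NNReal using hP_ne
  lift N to NNReal using hN_ne
  lift P' to NNReal using hP'_ne ENNReal.coe_ne_top
  lift N' to NNReal using hN'_ne ENNReal.coe_ne_top
  lift a to NNReal using ha
  lift b to NNReal using hb
  have h_real : (P' + (N + b) : ℝ) = N' + (P + a) := by exact_mod_cast h
  simp only [EReal.coe_nnreal_eq_coe_real, ← EReal.coe_sub, ← EReal.coe_add,
    EReal.coe_eq_coe_iff, ENNReal.coe_toReal]
  linarith

theorem eInt_add_of_integrable (hf : AEMeasurable f μ) (hf_int : IntWellDef μ f)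
    (hg : Integrable g μ) :
    eInt μ (fun x => f x + g x) = eInt μ f + (∫ x, g x ∂μ : ℝ) := by
  have hneg_le : ∫⁻ x, ENNReal.ofReal (-(f x + g x)) ∂μ ≤
      ∫⁻ x, ENNReal.ofReal (-f x) ∂μ + ∫⁻ x, ENNReal.ofReal (-g x) ∂μ := by
    simp only [neg_add]
    exact lintegral_ofReal_add_le hf.neg
  rw [integral_eq_lintegral_pos_part_sub_lintegral_neg_part hg]
  exact coe_sub_coe_eq_add_of_add_eq hg.lintegral_lt_top.ne hg.neg.lintegral_lt_top.ne
    (lintegral_ofReal_add_posPart_negPart hf hg.aemeasurable) (lintegral_ofReal_add_le hf)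
    hneg_le hf_int

theorem eInt_le_of_forall_pos_eInt_sub_le [IsFiniteMeasure μ] (hf : AEMeasurable f μ)
    (hf_int : IntWellDef μ f) {s : EReal} (h : ∀ δ : ℝ, 0 < δ → eInt μ (fun x => f x - δ) ≤ s) :
    eInt μ f ≤ s := by
  refine le_of_forall_lt fun a ha => ?_
  obtain ⟨b, hab, hb⟩ := EReal.lt_iff_exists_real_btwn.1 ha
  obtain ⟨b', hbb', hb'⟩ := EReal.lt_iff_exists_real_btwn.1 hb
  have hb_lt : 0 < b' - b := sub_pos.2 (EReal.coe_lt_coe_iff.1 hbb')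
  obtain ⟨δ, hδ, hδ_lt⟩ := exists_pos_mul_lt hb_lt (μ.real .univ)
  calc a < (b : EReal) := hab
    _ ≤ ((b' + ∫ _, -δ ∂μ : ℝ) : EReal) := by
      rw [integral_const, smul_eq_mul, EReal.coe_le_coe_iff]; linarith
    _ ≤ eInt μ f + (∫ _, -δ ∂μ : ℝ) := by
      rw [EReal.coe_add]; gcongr
    _ = eInt μ (fun x => f x - δ) := (eInt_add_of_integrable hf hf_int (integrable_const _)).symm
    _ ≤ s := h δ hδ

end ExtendedIntegral

section Gibbs

variable {α : Type*} [MeasurableSpace α] {μ ν : Measure α}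

theorem integrable_toReal_rnDeriv_mul [SigmaFinite μ] {g : α → ℝ} (hg : Integrable g μ) :
    Integrable (fun x => (μ.rnDeriv ν x).toReal * g x) ν :=
  (integrable_withDensity_iff_integrable_smul' (μ.measurable_rnDeriv ν)
    (μ.rnDeriv_lt_top ν)).1 (hg.mono_measure (μ.withDensity_rnDeriv_le ν))

theorem integral_toReal_rnDeriv_mul_le [SigmaFinite μ] {g : α → ℝ} (hg : Integrable g μ)
    (hg_nonneg : 0 ≤ᵐ[μ] g) : ∫ x, (μ.rnDeriv ν x).toReal * g x ∂ν ≤ ∫ x, g x ∂μ := by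
  simp only [← smul_eq_mul]
  rw [← integral_withDensity_eq_integral_toReal_smul (μ.measurable_rnDeriv ν) (μ.rnDeriv_lt_top ν)]
  exact integral_mono_measure (μ.withDensity_rnDeriv_le ν) hg_nonneg hg

theorem lintegral_ofReal_neg_llr_ne_top [SigmaFinite μ] [IsFiniteMeasure ν] (hμν : μ ≪ ν) :
    ∫⁻ x, ENNReal.ofReal (-llr μ ν x) ∂μ ≠ ⊤ := by
  refine lintegral_ofReal_neg_ne_top_of_le_ae (f := fun x => -(ν.rnDeriv μ x).toReal) ?_
    (Measure.integrable_toReal_rnDeriv.neg.neg.lintegral_lt_top.ne)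
  filter_upwards [exp_neg_llr hμν] with x hx
  linarith [Real.add_one_le_exp (-llr μ ν x)]

theorem eInt_le_eInt_llr [IsFiniteMeasure μ] [IsFiniteMeasure ν] (hμν : μ ≪ ν) {c : α → ℝ}
    (hc : Integrable (fun x => Real.exp (c x)) ν)
    (hc_le : ∫ x, Real.exp (c x) ∂ν ≤ μ.real .univ) : eInt μ c ≤ eInt μ (llr μ ν) := by
  set h : α → ℝ := fun x => (ν.rnDeriv μ x).toReal * Real.exp (c x) - 1 with hh
  have h_mul_int := integrable_toReal_rnDeriv_mul (ν := μ) hc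
  have h_int : Integrable h μ := h_mul_int.sub (integrable_const 1)
  have h_le : ∫ x, h x ∂μ ≤ 0 := by
    rw [integral_sub h_mul_int (integrable_const 1), integral_const, smul_eq_mul, mul_one,
      sub_nonpos]
    exact (integral_toReal_rnDeriv_mul_le hc (ae_of_all _ fun x => (Real.exp_pos _).le)).trans hc_le
  have hc_le_add : c ≤ᵐ[μ] fun x => llr μ ν x + h x := by
    filter_upwards [exp_neg_llr hμν] with x hx
    have := Real.add_one_le_exp (-llr μ ν x + c x)
    rw [Real.exp_add, hx] at this
    simp only [hh]
    linarith
  calc eInt μ c ≤ eInt μ (fun x => llr μ ν x + h x) := eInt_mono_ae hc_le_add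
    _ = eInt μ (llr μ ν) + (∫ x, h x ∂μ : ℝ) :=
      eInt_add_of_integrable (measurable_llr μ ν).aemeasurable
        (.inr (lintegral_ofReal_neg_llr_ne_top hμν)) h_int
    _ ≤ eInt μ (llr μ ν) := add_le_of_nonpos_right (by exact_mod_cast h_le)

end Gibbs

section KernMeas

variable {X Y : Type*} [MeasurableSpace X] [MeasurableSpace Y] {κ : Kernel Y X}

theorem ae_ae_of_ae_kernMeas [IsSFiniteKernel κ] {Q : Measure Y} [SFinite Q] {p : X × Y → Prop}
    (h : ∀ᵐ z ∂kernMeas κ Q, p z) : ∀ᵐ y ∂Q, ∀ᵐ x ∂κ y, p (x, y) :=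
  Measure.ae_ae_of_ae_compProd (ae_of_ae_map measurable_swap.aemeasurable h)

theorem setLIntegral_kernMeas_snd_preimage [IsSFiniteKernel κ] {Q : Measure Y} [SFinite Q]
    {f : X × Y → ℝ≥0∞} (hf : Measurable f) {B : Set Y} (hB : MeasurableSet B) :
    ∫⁻ z in Prod.snd ⁻¹' B, f z ∂kernMeas κ Q = ∫⁻ y in B, ∫⁻ x, f (x, y) ∂κ y ∂Q := by
  have hpre : Prod.swap ⁻¹' (Prod.snd ⁻¹' B : Set (X × Y)) = B ×ˢ Set.univ := by
    ext; simp
  rw [kernMeas, setLIntegral_map (measurable_snd hB) hf measurable_swap, hpre,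
    Measure.setLIntegral_compProd (f := fun z => f z.swap) (hf.comp measurable_swap) hB .univ]
  simp only [Measure.restrict_univ, Prod.swap_prod_mk]

instance isFiniteMeasure_kernMeas [IsFiniteKernel κ] {Q : Measure Y} [IsFiniteMeasure Q] :
    IsFiniteMeasure (kernMeas κ Q) :=
  inferInstanceAs (IsFiniteMeasure ((Q.compProd κ).map Prod.swap))

theorem kernMeas_const (ν : Measure X) [SFinite ν] (Q : Measure Y) [SFinite Q] :
    kernMeas (Kernel.const Y ν) Q = ν.prod Q := by
  rw [kernMeas, Measure.compProd_const, Measure.prod_swap]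

theorem ae_lintegral_rnDeriv_kernMeas_le_one [IsSFiniteKernel κ] (π : Measure (X × Y))
    [IsFiniteMeasure π] :
    ∀ᵐ y ∂π.snd, ∫⁻ x, π.rnDeriv (kernMeas κ π.snd) (x, y) ∂κ y ≤ 1 := by
  have hp := π.measurable_rnDeriv (kernMeas κ π.snd)
  refine ae_le_of_forall_setLIntegral_le_of_sigmaFinite (g := fun _ => 1)
    hp.lintegral_kernel_prod_left' fun B hB _ => ?_
  rw [← setLIntegral_kernMeas_snd_preimage hp hB, setLIntegral_one, Measure.snd_apply hB]
  exact Measure.setLIntegral_rnDeriv_le _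

end KernMeas

section Normalization

variable {X Y : Type*} [MeasurableSpace X] [MeasurableSpace Y] {κ : Kernel Y X}

/-- The `ν̂`-normalized functions of the source, for the kernel `ν̂ = κ`; measurability is not
part of the definition. -/
def IsNormalized (κ : Kernel Y X) (c : X × Y → ℝ) : Prop :=
  ∀ y, ∫ x, Real.exp (c (x, y)) ∂κ y = 1

/-- The well-defined integrals `∫ c dπ` of the normalized functions `c`: the entropy `Hker κ π` is
minus the supremum of this set. -/
def normalizedIntegrals (κ : Kernel Y X) (π : Measure (X × Y)) : Set EReal :=
  {r | ∃ c : X × Y → ℝ, Measurable c ∧ IsNormalized κ c ∧ IntWellDef π c ∧ r = eInt π c}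

/-- The Gibbs normalization `f - log ∫ e^f dν̂^y` of `f`, obtained by subtracting the logarithm of
the partition function of each fibre. -/
def gibbsNormalization (κ : Kernel Y X) (f : X × Y → ℝ) (z : X × Y) : ℝ :=
  f z - Real.log (∫ x, Real.exp (f (x, z.2)) ∂κ z.2)

theorem measurable_gibbsNormalization [IsSFiniteKernel κ] {f : X × Y → ℝ} (hf : Measurable f) :
    Measurable (gibbsNormalization κ f) :=
  hf.sub ((hf.exp.stronglyMeasurable.integral_kernel_prod_left').measurable.log.comp measurable_snd)

theorem isNormalized_gibbsNormalization [∀ y, NeZero (κ y)] {f : X × Y → ℝ}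
    (hf : ∀ y, Integrable (fun x => Real.exp (f (x, y))) (κ y)) :
    IsNormalized κ (gibbsNormalization κ f) := by
  intro y
  have hZ := integral_exp_pos (hf y)
  simp only [gibbsNormalization, Real.exp_sub, Real.exp_log hZ]
  rw [integral_div, div_self hZ.ne']

theorem exists_isNormalized_ge [IsFiniteKernel κ] [∀ y, NeZero (κ y)] {Q : Measure Y}
    {f : X × Y → ℝ} (hf : Measurable f)
    (hf_le : ∀ᵐ y ∂Q, ∫⁻ x, ENNReal.ofReal (Real.exp (f (x, y))) ∂κ y ≤ 1) :
    ∃ c, Measurable c ∧ IsNormalized κ c ∧ ∀ᵐ y ∂Q, ∀ x, f (x, y) ≤ c (x, y) := by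
  set G : Set Y := {y | ∫⁻ x, ENNReal.ofReal (Real.exp (f (x, y))) ∂κ y ≤ 1}
  have hG : MeasurableSet G :=
    hf.exp.ennreal_ofReal.lintegral_kernel_prod_left' measurableSet_Iic
  have hG_int (y : Y) (hy : y ∈ G) : Integrable (fun x => Real.exp (f (x, y))) (κ y) ∧
      ∫ x, Real.exp (f (x, y)) ∂κ y ≤ 1 := by
    have hexp_nonneg : 0 ≤ᵐ[κ y] fun x => Real.exp (f (x, y)) :=
      ae_of_all _ fun x => (Real.exp_pos _).le
    have hexp_meas : AEStronglyMeasurable (fun x => Real.exp (f (x, y))) (κ y) :=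
      Measurable.aestronglyMeasurable (by fun_prop)
    refine ⟨(lintegral_ofReal_ne_top_iff_integrable hexp_meas hexp_nonneg).1
      (ne_top_of_le_ne_top ENNReal.one_ne_top hy), ?_⟩
    rw [integral_eq_lintegral_of_nonneg_ae hexp_nonneg hexp_meas]
    exact ENNReal.toReal_mono ENNReal.one_ne_top hy
  set g : X × Y → ℝ := fun z => if z.2 ∈ G then f z else 0 with hg_def
  have hg : Measurable g := .ite (measurable_snd hG) hf measurable_const
  have hg_int (y : Y) : Integrable (fun x => Real.exp (g (x, y))) (κ y) := by
    by_cases hy : y ∈ G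
    · simpa only [hg_def, hy, if_true] using (hG_int y hy).1
    · simp only [hg_def, hy, if_false, integrable_const]
  refine ⟨gibbsNormalization κ g, measurable_gibbsNormalization hg,
    isNormalized_gibbsNormalization hg_int, ?_⟩
  filter_upwards [hf_le] with y (hy : y ∈ G) x
  simp only [gibbsNormalization, hg_def, hy, if_true]
  linarith [Real.log_nonpos (integral_nonneg fun x => (Real.exp_pos (f (x, y))).le)
    (hG_int y hy).2]

theorem eInt_le_sSup_normalizedIntegrals [IsFiniteKernel κ] [∀ y, NeZero (κ y)]
    {π : Measure (X × Y)} {f : X × Y → ℝ} (hf : Measurable f)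
    (hf_neg : ∫⁻ z, ENNReal.ofReal (-f z) ∂π ≠ ⊤)
    (hf_le : ∀ᵐ y ∂π.snd, ∫⁻ x, ENNReal.ofReal (Real.exp (f (x, y))) ∂κ y ≤ 1) :
    eInt π f ≤ sSup (normalizedIntegrals κ π) := by
  obtain ⟨c, hc, hc_norm, hfc⟩ := exists_isNormalized_ge hf hf_le
  have hfc_ae : f ≤ᵐ[π] c := by
    filter_upwards [ae_of_ae_map measurable_snd.aemeasurable hfc] with z hz using hz z.1
  have hc_int : IntWellDef π c := .inr (lintegral_ofReal_neg_ne_top_of_le_ae hfc_ae hf_neg)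
  exact (eInt_mono_ae hfc_ae).trans (le_sSup ⟨c, hc, hc_norm, hc_int, rfl⟩)

theorem IsNormalized.integrable_exp_kernMeas [IsSFiniteKernel κ] {Q : Measure Y}
    [IsFiniteMeasure Q] {c : X × Y → ℝ} (hc : IsNormalized κ c) (hc_meas : Measurable c) :
    Integrable (fun z => Real.exp (c z)) (kernMeas κ Q) := by
  rw [kernMeas, integrable_map_measure hc_meas.exp.aestronglyMeasurable
    measurable_swap.aemeasurable, Measure.integrable_compProd_iff
    (hc_meas.exp.comp measurable_swap).aestronglyMeasurable]
  refine ⟨ae_of_all _ fun y => integrable_of_integral_eq_one (hc y), ?_⟩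
  simp only [Function.comp_apply, Prod.swap_prod_mk, Real.norm_eq_abs, Real.abs_exp, hc _]
  exact integrable_const _

theorem IsNormalized.integral_exp_kernMeas [IsSFiniteKernel κ] {Q : Measure Y}
    [IsFiniteMeasure Q] {c : X × Y → ℝ} (hc : IsNormalized κ c) (hc_meas : Measurable c) :
    ∫ z, Real.exp (c z) ∂kernMeas κ Q = Q.real .univ := by
  have hint : Integrable (fun z : Y × X => Real.exp (c z.swap)) (Q.compProd κ) :=
    (hc.integrable_exp_kernMeas hc_meas).comp_measurable measurable_swap
  rw [kernMeas, integral_map measurable_swap.aemeasurable hc_meas.exp.aestronglyMeasurable,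
    Measure.integral_compProd hint]
  simp only [Prod.swap_prod_mk, hc _, integral_const, smul_eq_mul, mul_one]

end Normalization

section Duality

variable {X Y : Type*} [MeasurableSpace X] [MeasurableSpace Y] {κ : Kernel Y X}

theorem sSup_normalizedIntegrals_le_KL [IsFiniteKernel κ] (π : Measure (X × Y))
    [IsFiniteMeasure π] : sSup (normalizedIntegrals κ π) ≤ KL π (kernMeas κ π.snd) := by
  refine sSup_le ?_
  rintro _ ⟨c, hc, hc_norm, -, rfl⟩
  unfold KL
  split_ifs with hac
  · refine eInt_le_eInt_llr hac (hc_norm.integrable_exp_kernMeas hc) ?_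
    rw [hc_norm.integral_exp_kernMeas hc, measureReal_def, Measure.snd_univ, measureReal_def]
  · exact le_top

theorem exists_pos_forall_mul_measure_univ_le_one (κ : Kernel Y X) [IsFiniteKernel κ] :
    ∃ r : ℝ, 0 < r ∧ ∀ y, ENNReal.ofReal r * κ y .univ ≤ 1 := by
  refine ⟨(κ.bound.toReal + 1)⁻¹, by positivity, fun y => ?_⟩
  rw [ENNReal.ofReal_inv_of_pos (by positivity), mul_comm, ← div_eq_mul_inv]
  refine ENNReal.div_le_of_le_mul ?_
  rw [one_mul, ← ENNReal.ofReal_toReal (measure_ne_top (κ y) .univ)]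
  refine ENNReal.ofReal_le_ofReal ?_
  have := ENNReal.toReal_mono κ.bound_ne_top (κ.measure_le_bound y .univ)
  linarith

theorem lintegral_ofReal_convexCombination_le_one {μ : Measure X} {p : X → ℝ≥0∞} {t r : ℝ}
    (ht : 0 ≤ t) (ht_le : t ≤ 1) (hr : 0 ≤ r) (hp : ∫⁻ x, p x ∂μ ≤ 1)
    (hr_le : ENNReal.ofReal r * μ .univ ≤ 1) :
    ∫⁻ x, ENNReal.ofReal (t * (p x).toReal + (1 - t) * r) ∂μ ≤ 1 := by
  have ht' : 0 ≤ 1 - t := sub_nonneg.2 ht_le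
  have hmix (x : X) : ENNReal.ofReal (t * (p x).toReal + (1 - t) * r) ≤
      ENNReal.ofReal t * p x + ENNReal.ofReal (1 - t) * ENNReal.ofReal r := by
    rw [ENNReal.ofReal_add (by positivity) (by positivity), ENNReal.ofReal_mul ht,
      ENNReal.ofReal_mul ht']
    gcongr
    exact ENNReal.ofReal_toReal_le
  calc ∫⁻ x, ENNReal.ofReal (t * (p x).toReal + (1 - t) * r) ∂μ
      ≤ ∫⁻ x, (ENNReal.ofReal t * p x + ENNReal.ofReal (1 - t) * ENNReal.ofReal r) ∂μ :=
        lintegral_mono hmix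
    _ = ENNReal.ofReal t * ∫⁻ x, p x ∂μ +
          ENNReal.ofReal (1 - t) * (ENNReal.ofReal r * μ .univ) := by
        rw [lintegral_add_right _ measurable_const,
          lintegral_const_mul' _ _ ENNReal.ofReal_ne_top, lintegral_const, mul_assoc]
    _ ≤ ENNReal.ofReal t * 1 + ENNReal.ofReal (1 - t) * 1 := by gcongr
    _ = 1 := by
        rw [mul_one, mul_one, ← ENNReal.ofReal_add ht ht', add_sub_cancel, ENNReal.ofReal_one]

theorem eInt_llr_le_sSup_normalizedIntegrals [IsFiniteKernel κ] [∀ y, NeZero (κ y)]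
    {π : Measure (X × Y)} [IsFiniteMeasure π] (hac : π ≪ kernMeas κ π.snd) :
    eInt π (llr π (kernMeas κ π.snd)) ≤ sSup (normalizedIntegrals κ π) := by
  obtain ⟨r, hr, hr_le⟩ := exists_pos_forall_mul_measure_univ_le_one κ
  set p := π.rnDeriv (kernMeas κ π.snd)
  have hp : Measurable p := π.measurable_rnDeriv _
  refine eInt_le_of_forall_pos_eInt_sub_le (measurable_llr _ _).aemeasurable
    (.inr (lintegral_ofReal_neg_llr_ne_top hac)) fun δ hδ => ?_
  set t := Real.exp (-δ)
  have ht : 0 < t := Real.exp_pos _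
  have ht_lt : 0 < 1 - t := sub_pos.2 (Real.exp_lt_one_iff.2 (neg_lt_zero.2 hδ))
  have hmix_pos (z : X × Y) : 0 < t * (p z).toReal + (1 - t) * r := by positivity
  set f : X × Y → ℝ := fun z => Real.log (t * (p z).toReal + (1 - t) * r)
  have hf : Measurable f := by fun_prop
  have hf_neg : ∫⁻ z, ENNReal.ofReal (-f z) ∂π ≠ ⊤ := by
    refine lintegral_ofReal_neg_ne_top_of_le_ae (f := fun _ => Real.log ((1 - t) * r))
      (ae_of_all _ fun z => Real.log_le_log (by positivity) ?_)
      (integrable_const _).neg.lintegral_lt_top.ne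
    have : 0 ≤ t * (p z).toReal := by positivity
    linarith
  have hf_le : ∀ᵐ y ∂π.snd, ∫⁻ x, ENNReal.ofReal (Real.exp (f (x, y))) ∂κ y ≤ 1 := by
    filter_upwards [ae_lintegral_rnDeriv_kernMeas_le_one (κ := κ) π] with y hy
    simp only [f, Real.exp_log (hmix_pos _)]
    exact lintegral_ofReal_convexCombination_le_one ht.le (sub_pos.1 ht_lt).le hr.le hy (hr_le y)
  refine (eInt_mono_ae ?_).trans (eInt_le_sSup_normalizedIntegrals hf hf_neg hf_le)
  filter_upwards [exp_llr_of_ac _ _ hac] with z hz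
  rw [Real.le_log_iff_exp_le (hmix_pos z), sub_eq_neg_add, Real.exp_add, hz]
  have : 0 ≤ (1 - t) * r := by positivity
  linarith

theorem exists_forall_mul_measureReal_add_le_sSup_normalizedIntegrals [IsFiniteKernel κ]
    [∀ y, NeZero (κ y)] {π : Measure (X × Y)} [IsFiniteMeasure π] {A : Set (X × Y)}
    (hA : MeasurableSet A) (hA_null : kernMeas κ π.snd A = 0) :
    ∃ b : ℝ, ∀ s : ℝ, ((s * π.real A + b : ℝ) : EReal) ≤ sSup (normalizedIntegrals κ π) := by
  obtain ⟨r, hr, hr_le⟩ := exists_pos_forall_mul_measure_univ_le_one κ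
  refine ⟨π.real .univ * Real.log r, fun s => ?_⟩
  set f : X × Y → ℝ := fun z => A.indicator (fun _ => s) z + Real.log r with hf_def
  have hA_int : Integrable (A.indicator fun _ => s) π := (integrable_const s).indicator hA
  have hf_int : Integrable f π := hA_int.add (integrable_const _)
  have hf_le : ∀ᵐ y ∂π.snd, ∫⁻ x, ENNReal.ofReal (Real.exp (f (x, y))) ∂κ y ≤ 1 := by
    filter_upwards [ae_ae_of_ae_kernMeas (measure_eq_zero_iff_ae_notMem.1 hA_null)] with y hy
    calc ∫⁻ x, ENNReal.ofReal (Real.exp (f (x, y))) ∂κ y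
        = ∫⁻ _, ENNReal.ofReal r ∂κ y := by
          refine lintegral_congr_ae ?_
          filter_upwards [hy] with x hx
          simp [hf_def, hx, Real.exp_log hr]
      _ ≤ 1 := by rw [lintegral_const]; exact hr_le y
  have hf_eInt : eInt π f = (s * π.real A + π.real .univ * Real.log r : ℝ) := by
    rw [eInt_of_integrable hf_int, integral_add hA_int (integrable_const _),
      integral_indicator_const s hA, integral_const, smul_eq_mul, smul_eq_mul, mul_comm s]
  exact hf_eInt.symm.trans_le (eInt_le_sSup_normalizedIntegrals
    ((measurable_const.indicator hA).add_const _) hf_int.neg.lintegral_lt_top.ne hf_le)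

theorem sSup_normalizedIntegrals_eq_top [IsFiniteKernel κ] [∀ y, NeZero (κ y)]
    {π : Measure (X × Y)} [IsFiniteMeasure π] (hac : ¬ π ≪ kernMeas κ π.snd) :
    sSup (normalizedIntegrals κ π) = ⊤ := by
  obtain ⟨A, hA, hA_null, hA_pos⟩ :
      ∃ A, MeasurableSet A ∧ kernMeas κ π.snd A = 0 ∧ 0 < π.real A := by
    contrapose! hac
    refine .mk fun A hA hA_null => ?_
    exact (measureReal_eq_zero_iff).1 (le_antisymm (hac A hA hA_null) measureReal_nonneg)
  obtain ⟨b, hb⟩ := exists_forall_mul_measureReal_add_le_sSup_normalizedIntegrals hA hA_null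
  refine (EReal.eq_top_iff_forall_lt _).2 fun a => lt_of_lt_of_le ?_
    (hb ((a + 1 - b) / π.real A))
  rw [div_mul_cancel₀ _ hA_pos.ne', sub_add_cancel, EReal.coe_lt_coe_iff]
  exact lt_add_one a

theorem sSup_normalizedIntegrals_eq_KL [IsFiniteKernel κ] [∀ y, NeZero (κ y)]
    (π : Measure (X × Y)) [IsFiniteMeasure π] :
    sSup (normalizedIntegrals κ π) = KL π (kernMeas κ π.snd) := by
  refine (sSup_normalizedIntegrals_le_KL π).antisymm ?_
  by_cases hac : π ≪ kernMeas κ π.snd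
  · exact (if_pos hac).trans_le (eInt_llr_le_sSup_normalizedIntegrals hac)
  · exact (sSup_normalizedIntegrals_eq_top hac).symm ▸ le_top

theorem statement1_general (κ : Kernel Y X) [IsFiniteKernel κ] [∀ y, NeZero (κ y)]
    (π : Measure (X × Y)) [IsFiniteMeasure π] (Q : Measure Y) (hQ : π.map Prod.snd = Q) :
    sSup (normalizedIntegrals κ π) = KL π (kernMeas κ Q)
    ∧ Hker κ π = - KL π (kernMeas κ Q)
    ∧ ∀ ν : Measure X, IsFiniteMeasure ν → ν ≠ 0 →
        Hker (Kernel.const Y ν) π = - KL π (ν.prod Q) := by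
  subst hQ
  refine ⟨sSup_normalizedIntegrals_eq_KL π,
    congrArg Neg.neg (sSup_normalizedIntegrals_eq_KL π), fun ν _ hν => ?_⟩
  have (y : Y) : NeZero (Kernel.const Y ν y) := ⟨hν⟩
  rw [← kernMeas_const]
  exact congrArg Neg.neg (sSup_normalizedIntegrals_eq_KL π)

end Duality

/-- the supremum of `∫ c dπ` over `ν̂`-normalized measurable functions with
well-defined integral equals `D_KL(π | ν̂ dQ)`, where `Q` is the `y`-marginal of `π`;
equivalently `H^{ν̂}(π) = −D_KL(π | ν̂ dQ)`.  In particular, for the constant kernel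
`ν̂^y = ν`, `H^ν(π) = −D_KL(π | ν × Q)`. -/
theorem statement1 {X Y : Type*} [MeasurableSpace X] [MeasurableSpace Y]
    (κ : Kernel Y X) [IsMarkovKernel κ]
    (π : Measure (X × Y)) [IsProbabilityMeasure π]
    (Q : Measure Y) (hQ : π.map Prod.snd = Q) :
    (sSup { r : EReal | ∃ c : X × Y → ℝ, Measurable c ∧
        (∀ y, (∫ x, Real.exp (c (x, y)) ∂(κ y)) = 1) ∧ IntWellDef π c ∧ r = eInt π c }
      = KL π (kernMeas κ Q))
    ∧ Hker κ π = - KL π (kernMeas κ Q)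
    ∧ ∀ ν : Measure X, IsProbabilityMeasure ν →
        Hker (Kernel.const Y ν) π = - KL π (ν.prod Q) := by
  obtain ⟨hsup, hH, hconst⟩ := statement1_general κ π Q hQ
  exact ⟨hsup, hH, fun ν _ => hconst ν inferInstance (NeZero.ne ν)⟩

end
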